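/- Classification of singular vectors for type B: let (ε₁,…,ε_n) = (1^κ,0^{n−κ}) with 1 ≤ κ ≤ n−1. A vector of 𝒲⊗𝒲 that is a simultaneous eigenvector of all Δ(k_i) (0 ≤ i ≤ n) and is annihilated by Δ(e_i) for all 1 ≤ i ≤ n is a nonzero scalar multiple of ξ_l for some l ∈ ℕ, where ξ_l = Σ_{m=0}^{l} (−p)^{−m} q^{m(l−(m+1)/2)} [l choose m] |m·e_n⟩ ⊗ |(l−m)·e_n⟩; conversely every ξ_l has these properties. -/

import Mathlib

/-!
Why the classification holds. Let `v` be killed by all `Δ(e_i)`, `1 ≤ i ≤ n`, and write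
`v(a, b)` for its coefficient at `|a⟩ ⊗ |b⟩`.

The operator `Δ(e_n)` involves only the last site, which is bosonic. Its kernel condition is a
two-term recurrence with nonzero scalars (`dEB_last_apply`), relating the coefficients in which one
quantum at the last site sits in the first or in the second factor. Hence within the support of
`v` all quanta of the last site can be moved to either factor (`exists_shift_right`,
`exists_shift_left`).

For `i < n`, suppose site `i + 1` is empty in `a`. The label reached from `|a⟩ ⊗ |b⟩` by `1 ⊗ e_i`
then has no second source, so its coefficient in `Δ(e_i) v` is a nonzero multiple of `v(a, b)`
whenever `b` has a quantum at site `i`; this forces site `i` of `b` to be empty (`empty_right`),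
and symmetrically with the factors exchanged (`empty_left`). For `i = n - 1` the emptiness is
arranged by moving quanta, and for smaller `i` it is the induction hypothesis; so `v` is supported
on the vectors `|m·e_n⟩ ⊗ |j·e_n⟩` (`support_last`). The weight for `k_n` fixes `m + j = l`, as `q`
is not a root of unity (`kval_last_inj`), and the recurrence for `e_n`, which the coefficients of
`ξ_l` satisfy too (`xiCoef_succ`), determines `v` from its coefficient at `m = 0` (`coef_eq`).

Conversely, `ξ_l` is killed by `Δ(e_n)` by that recurrence and by the other `Δ(e_i)` because
`[0] = 0` (`dEB_xiB`); it is an eigenvector of `Δ(k_i)` because the eigenvalue of `k_i ⊗ k_i` on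
`|m·e_n⟩ ⊗ |j·e_n⟩` depends only on `m + j` (`kval_mul`).
-/

open scoped BigOperators

set_option synthInstance.maxHeartbeats 1000000
set_option maxHeartbeats 1000000

noncomputable section

namespace TetraGQ

/-! ## Scalar ingredients -/

/-- `(a;qb)_m = ∏_{k=0}^{m-1} (1 - a qb^k)`. -/
def poch (qb a : ℂ) (m : ℕ) : ℂ := ∏ k ∈ Finset.range m, (1 - a * qb ^ k)

/-- The `q`-binomial `binom(m,k)_qb`, zero unless `k ≤ m`. -/
def qbinom (qb : ℂ) (m k : ℕ) : ℂ :=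
  if k ≤ m then poch qb qb m / (poch qb qb k * poch qb qb (m - k)) else 0

/-- `[m] = (q^m - q^{-m})/(q - q^{-1})`. -/
def qnum (q : ℂ) (m : ℕ) : ℂ := (q ^ m - q⁻¹ ^ m) / (q - q⁻¹)

/-- `[m]! = ∏_{k=1}^m [k]`. -/
def qfac (q : ℂ) (m : ℕ) : ℂ := ∏ k ∈ Finset.range m, qnum q (k + 1)

/-- The symmetric `q`-binomial `[m choose k]`, zero unless `k ≤ m`. -/
def qbin (q : ℂ) (m k : ℕ) : ℂ :=
  if k ≤ m then qfac q m / (qfac q k * qfac q (m - k)) else 0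

/-- The 3D `R` matrix entry `R^{a,b,c}_{i,j,k}`. -/
def R3 (q : ℂ) (a b c i j k : ℕ) : ℂ :=
  (if a + b = i + j ∧ b + c = j + k then (1 : ℂ) else 0) *
    ∑ lam ∈ Finset.range (b + 1),
      (-1 : ℂ) ^ lam *
        q ^ ((i : ℤ) * ((c : ℤ) - (j : ℤ)) + ((k : ℤ) + 1) * (lam : ℤ) +
            ((b : ℤ) - (lam : ℤ)) * ((b : ℤ) - (lam : ℤ) - (k : ℤ))) *
        (poch (q ^ 2) (q ^ 2) (c + (b - lam)) / poch (q ^ 2) (q ^ 2) c) *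
        qbinom (q ^ 2) i (b - lam) * qbinom (q ^ 2) j lam

/-- The 3D `L` matrix entry `L^{a,b,c}_{i,j,k}`. -/
def L3 (q : ℂ) (a b c i j k : ℕ) : ℂ :=
  if a = 0 ∧ b = 0 ∧ i = 0 ∧ j = 0 ∧ c = k then 1
  else if a = 1 ∧ b = 1 ∧ i = 1 ∧ j = 1 ∧ c = k then 1
  else if a = 0 ∧ b = 1 ∧ i = 0 ∧ j = 1 ∧ c = k then -q ^ (k + 1)
  else if a = 1 ∧ b = 0 ∧ i = 1 ∧ j = 0 ∧ c = k then q ^ k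
  else if a = 0 ∧ b = 1 ∧ i = 1 ∧ j = 0 ∧ c + 1 = k then 1 - q ^ (2 * k)
  else if a = 1 ∧ b = 0 ∧ i = 0 ∧ j = 1 ∧ c = k + 1 then 1
  else 0

/-- `S^(0) = R`, `S^(1) = L`. -/
def Sg (q : ℂ) (e : Bool) (a b c i j k : ℕ) : ℂ :=
  if e then L3 q a b c i j k else R3 q a b c i j k

/-- Coefficient of `z^{c0}` in the trace solution matrix element
`S₀(z)^{a,b}_{i,j}`. -/
def trCoef (q : ℂ) {n : ℕ} [NeZero n] (ε : Fin n → Bool) (a b i j : Fin n → ℕ)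
    (c0 : ℕ) : ℂ :=
  ∑ᶠ c : Fin n → ℕ,
    if c 0 = c0 then
      ∏ t : Fin n, Sg q (ε t) (a t) (b t) (c t) (i t) (j t) (c (t + 1))
    else 0

/-- Coefficient of `z^{c0}` in the boundary solution matrix element
`S₀^{1,1}(z)^{a,b}_{i,j}`. -/
def bdCoef (q : ℂ) {n : ℕ} (ε : Fin n → Bool) (a b i j : Fin n → ℕ) (c0 : ℕ) : ℂ :=
  ∑ᶠ c : Fin (n + 1) → ℕ,
    if c 0 = c0 then
      poch (q ^ 2) (q ^ 2) c0 / (poch q q c0 * poch q q (c (Fin.last n))) *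
        ∏ t : Fin n, Sg q (ε t) (a t) (b t) (c t.castSucc) (i t) (j t) (c t.succ)
    else 0

/-- Coefficient of `z^{c0}` in the boundary solution matrix element
`S₀^{s,t}(z)^{a,b}_{i,j}`. -/
def bdCoefST (q : ℂ) (s t : ℕ) {n : ℕ} (ε : Fin n → Bool) (a b i j : Fin n → ℕ)
    (c0 : ℕ) : ℂ :=
  ∑ᶠ c : Fin (n + 1) → ℕ,
    if c 0 = c0 then
      poch (q ^ 2) (q ^ 2) (s * c0) /
          (poch (q ^ s ^ 2) (q ^ s ^ 2) c0 * poch (q ^ t ^ 2) (q ^ t ^ 2) (c (Fin.last n))) *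
        ∏ u : Fin n,
          Sg q (ε u) (a u) (b u)
            (if u.castSucc = 0 then s * c0 else c u.castSucc) (i u) (j u)
            (if u.succ = Fin.last n then t * c (Fin.last n) else c u.succ)
    else 0

/-! ## The spaces `𝒲` and `𝒲⊗𝒲` -/

/-- `m` is an admissible occupation vector: at positions with `ε = 1` the entry is `≤ 1`. -/
def Ok {n : ℕ} (ε : Fin n → Bool) (m : Fin n → ℕ) : Prop := ∀ t, ε t = true → m t ≤ 1

instance {n : ℕ} (ε : Fin n → Bool) : DecidablePred (Ok ε) := fun m =>
  decidable_of_iff (∀ t, ε t = true → m t ≤ 1) Iff.rfl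

/-- Basis labels of `𝒲`. -/
def Idx {n : ℕ} (ε : Fin n → Bool) : Type := {m : Fin n → ℕ // Ok ε m}

/-- The space `𝒲` with basis `|m⟩`, over the field `L`. -/
abbrev W (L : Type) [Field L] {n : ℕ} (ε : Fin n → Bool) : Type := Idx ε →₀ L

/-- The space `𝒲 ⊗ 𝒲` with basis `|a⟩⊗|b⟩`, over the field `L`. -/
abbrev WW (L : Type) [Field L] {n : ℕ} (ε : Fin n → Bool) : Type := (Idx ε × Idx ε) →₀ L

/-- The ket `|m⟩ ∈ 𝒲`; it is `0` if any coordinate is out of range. -/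
def ket (L : Type) [Field L] {n : ℕ} (ε : Fin n → Bool) (m : Fin n → ℤ) : W L ε :=
  if h : (∀ t, 0 ≤ m t) ∧ Ok ε (fun t => (m t).toNat) then
    Finsupp.single ⟨fun t => (m t).toNat, h.2⟩ 1
  else 0

/-- The ket `|a⟩⊗|b⟩ ∈ 𝒲⊗𝒲`; it is `0` if any coordinate is out of range. -/
def kk (L : Type) [Field L] {n : ℕ} (ε : Fin n → Bool) (a b : Fin n → ℤ) : WW L ε :=
  if h : ((∀ t, 0 ≤ a t) ∧ Ok ε (fun t => (a t).toNat)) ∧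
      ((∀ t, 0 ≤ b t) ∧ Ok ε (fun t => (b t).toNat)) then
    Finsupp.single (⟨fun t => (a t).toNat, h.1.2⟩, ⟨fun t => (b t).toNat, h.2.2⟩) 1
  else 0

/-- The linear endomorphism of a free module determined by images of basis vectors. -/
def mkEnd (L : Type) [Field L] {α : Type} (v : α → (α →₀ L)) :
    (α →₀ L) →ₗ[L] (α →₀ L) :=
  Finsupp.lsum L fun m => LinearMap.toSpanSingleton L (α →₀ L) (v m)

/-- Product of vectors of `𝒲`, landing in `𝒲⊗𝒲`. -/
def tens (L : Type) [Field L] {n : ℕ} {ε : Fin n → Bool} (u v : W L ε) : WW L ε :=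
  u.sum fun a ca => v.sum fun b cb => Finsupp.single (a, b) (ca * cb)

/-- The operator `A ⊗ B` on `𝒲⊗𝒲`. -/
def opT (L : Type) [Field L] {n : ℕ} {ε : Fin n → Bool}
    (A B : W L ε →ₗ[L] W L ε) : WW L ε →ₗ[L] WW L ε :=
  mkEnd L fun mm => tens L (A (Finsupp.single mm.1 1)) (B (Finsupp.single mm.2 1))

/-- The subspace `𝒲_l ⊗ 𝒲_m` of `𝒲⊗𝒲`. -/
def WWlm (L : Type) [Field L] {n : ℕ} (ε : Fin n → Bool) (l m : ℕ) :
    Submodule L (WW L ε) :=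
  Submodule.span L {v | ∃ p : Idx ε × Idx ε,
    (∑ t, p.1.1 t) = l ∧ (∑ t, p.2.1 t) = m ∧ v = Finsupp.single p 1}

/-- The subspace `𝒲_l` of `𝒲`. -/
def Wl (L : Type) [Field L] {n : ℕ} (ε : Fin n → Bool) (l : ℕ) : Submodule L (W L ε) :=
  Submodule.span L {v | ∃ p : Idx ε, (∑ t, p.1 t) = l ∧ v = Finsupp.single p 1}

/-! ## The scalar field of formal Laurent series in `z` over `ℂ` -/

abbrev K : Type := LaurentSeries ℂ

/-- The power series `Σ_{c≥0} f(c) z^c` as an element of `K`. -/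
def mkS (f : ℕ → ℂ) : K := HahnSeries.ofPowerSeries ℤ ℂ (PowerSeries.mk f)

/-- Constants `ℂ → K`. -/
def cK : ℂ →+* K := HahnSeries.C

/-- The variable `z ∈ K`. -/
def zK : K := mkS fun c => if c = 1 then 1 else 0

/-! ## The solutions of the Yang-Baxter equation -/

/-- The unnormalized trace solution `S₀(z)` acting on `𝒲⊗𝒲`. -/
def S0tr (q : ℂ) {n : ℕ} [NeZero n] (ε : Fin n → Bool) : WW K ε →ₗ[K] WW K ε :=
  mkEnd K fun ij =>
    ∑ a ∈ Fintype.piFinset (fun t => Finset.range (ij.1.1 t + ij.2.1 t + 1)),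
      mkS (trCoef q ε a (fun t => ij.1.1 t + ij.2.1 t - a t) ij.1.1 ij.2.1) •
        kk K ε (fun t => (a t : ℤ)) (fun t => (ij.1.1 t : ℤ) + (ij.2.1 t : ℤ) - (a t : ℤ))

/-- The unnormalized boundary solution `S₀^{1,1}(z)` acting on `𝒲⊗𝒲`. -/
def S0bd (q : ℂ) {n : ℕ} (ε : Fin n → Bool) : WW K ε →ₗ[K] WW K ε :=
  mkEnd K fun ij =>
    ∑ a ∈ Fintype.piFinset (fun t => Finset.range (ij.1.1 t + ij.2.1 t + 1)),
      mkS (bdCoef q ε a (fun t => ij.1.1 t + ij.2.1 t - a t) ij.1.1 ij.2.1) •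
        kk K ε (fun t => (a t : ℤ)) (fun t => (ij.1.1 t : ℤ) + (ij.2.1 t : ℤ) - (a t : ℤ))

/-- The unnormalized boundary solution `S₀^{s,t}(z)` acting on `𝒲⊗𝒲`. -/
def S0bdST (q : ℂ) (s t : ℕ) {n : ℕ} (ε : Fin n → Bool) : WW K ε →ₗ[K] WW K ε :=
  mkEnd K fun ij =>
    ∑ a ∈ Fintype.piFinset (fun u => Finset.range (ij.1.1 u + ij.2.1 u + 1)),
      mkS (bdCoefST q s t ε a (fun u => ij.1.1 u + ij.2.1 u - a u) ij.1.1 ij.2.1) •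
        kk K ε (fun u => (a u : ℤ)) (fun u => (ij.1.1 u : ℤ) + (ij.2.1 u : ℤ) - (a u : ℤ))

/-- The diagonal gauge operator; `Kdiag pc ε s |m⟩ = pc^{s·(m₁+⋯+m_n)} |m⟩`
(`s = -1` gives `K`, `s = 1` gives `K⁻¹`). -/
def Kdiag (pc : ℂ) {n : ℕ} (ε : Fin n → Bool) (s : ℤ) : W K ε →ₗ[K] W K ε :=
  mkEnd K fun m => cK (pc ^ (s * ∑ t, (m.1 t : ℤ))) • Finsupp.single m 1

/-- The gauge transformed boundary solution `S̃₀^{1,1}(z) = (K⊗1) S₀^{1,1}(z) (1⊗K⁻¹)`. -/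
def S0bdT (q pc : ℂ) {n : ℕ} (ε : Fin n → Bool) : WW K ε →ₗ[K] WW K ε :=
  opT K (Kdiag pc ε (-1)) LinearMap.id ∘ₗ S0bd q ε ∘ₗ opT K LinearMap.id (Kdiag pc ε 1)

/-! ## The generalized quantum group actions -/

/-- Value of an occupation vector at a natural-number position. -/
def av {n : ℕ} (m : Fin n → ℕ) (p : ℕ) : ℕ := if h : p < n then m ⟨p, h⟩ else 0

/-- Unit coordinate vector at a natural-number position. -/
def dlt {n : ℕ} (p : ℕ) : Fin n → ℤ := fun t => if (t : ℕ) = p then 1 else 0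

/-- `q_i = q` if `ε_i = 0` and `-q⁻¹` if `ε_i = 1` (0-based positions). -/
def qc (q : ℂ) {n : ℕ} (ε : Fin n → Bool) (p : ℕ) : ℂ :=
  if h : p < n then (if ε ⟨p, h⟩ then -q⁻¹ else q) else q

/-- Type A generator `e_r` of the action `π_x`. -/
def eA (q : ℂ) {L : Type} [Field L] (ι : ℂ →+* L) {n : ℕ} (ε : Fin n → Bool) (x : L)
    (r : Fin n) : W L ε →ₗ[L] W L ε :=
  mkEnd L fun m =>
    (x ^ (if (r : ℕ) = 0 then 1 else 0) * ι (qnum q (av m.1 (((r : ℕ) + n - 1) % n)))) •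
      ket L ε fun t => (m.1 t : ℤ) - dlt (((r : ℕ) + n - 1) % n) t + dlt (r : ℕ) t

/-- Type A generator `f_r` of the action `π_x`. -/
def fA (q : ℂ) {L : Type} [Field L] (ι : ℂ →+* L) {n : ℕ} (ε : Fin n → Bool) (x : L)
    (r : Fin n) : W L ε →ₗ[L] W L ε :=
  mkEnd L fun m =>
    (x ^ (if (r : ℕ) = 0 then (-1 : ℤ) else 0) * ι (qnum q (av m.1 (r : ℕ)))) •
      ket L ε fun t => (m.1 t : ℤ) + dlt (((r : ℕ) + n - 1) % n) t - dlt (r : ℕ) t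

/-- Type A generator `k_r^{s}` (`s = ±1`) of the action `π_x`. -/
def kA (q : ℂ) {L : Type} [Field L] (ι : ℂ →+* L) {n : ℕ} (ε : Fin n → Bool) (s : ℤ)
    (r : Fin n) : W L ε →ₗ[L] W L ε :=
  mkEnd L fun m =>
    ι ((qc q ε (((r : ℕ) + n - 1) % n) ^ (-(av m.1 (((r : ℕ) + n - 1) % n) : ℤ)) *
        qc q ε (r : ℕ) ^ (av m.1 (r : ℕ) : ℤ)) ^ s) • Finsupp.single m 1

/-- Type B generator `e_r` of the action `π_x`. -/
def eB (q : ℂ) {L : Type} [Field L] (ι : ℂ →+* L) {n : ℕ} (ε : Fin n → Bool) (x : L)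
    (r : Fin (n + 1)) : W L ε →ₗ[L] W L ε :=
  mkEnd L fun m =>
    if (r : ℕ) = 0 then x • ket L ε (fun t => (m.1 t : ℤ) + dlt 0 t)
    else if (r : ℕ) = n then
      ι (qnum q (av m.1 (n - 1))) • ket L ε (fun t => (m.1 t : ℤ) - dlt (n - 1) t)
    else
      ι (qnum q (av m.1 ((r : ℕ) - 1))) •
        ket L ε (fun t => (m.1 t : ℤ) - dlt ((r : ℕ) - 1) t + dlt (r : ℕ) t)

/-- Type B generator `f_r` of the action `π_x`. -/
def fB (q : ℂ) {L : Type} [Field L] (ι : ℂ →+* L) {n : ℕ} (ε : Fin n → Bool) (x : L)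
    (r : Fin (n + 1)) : W L ε →ₗ[L] W L ε :=
  mkEnd L fun m =>
    if (r : ℕ) = 0 then
      (x⁻¹ * ι (qnum q (av m.1 0))) • ket L ε (fun t => (m.1 t : ℤ) - dlt 0 t)
    else if (r : ℕ) = n then ket L ε (fun t => (m.1 t : ℤ) + dlt (n - 1) t)
    else
      ι (qnum q (av m.1 (r : ℕ))) •
        ket L ε (fun t => (m.1 t : ℤ) + dlt ((r : ℕ) - 1) t - dlt (r : ℕ) t)

/-- Type B generator `k_r^{s}` (`s = ±1`) of the action `π_x`; `pc = i q^{-1/2}`. -/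
def kB (q pc : ℂ) {L : Type} [Field L] (ι : ℂ →+* L) {n : ℕ} (ε : Fin n → Bool) (s : ℤ)
    (r : Fin (n + 1)) : W L ε →ₗ[L] W L ε :=
  mkEnd L fun m =>
    ι ((if (r : ℕ) = 0 then pc⁻¹ * qc q ε 0 ^ (av m.1 0 : ℤ)
        else if (r : ℕ) = n then pc * qc q ε (n - 1) ^ (-(av m.1 (n - 1) : ℤ))
        else qc q ε ((r : ℕ) - 1) ^ (-(av m.1 ((r : ℕ) - 1) : ℤ)) *
          qc q ε (r : ℕ) ^ (av m.1 (r : ℕ) : ℤ)) ^ s) • Finsupp.single m 1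

/-! ## Coproduct actions on `𝒲⊗𝒲` (type A) -/

/-- `Δ(e_r) = 1⊗e_r + e_r⊗k_r`, with `π_x` on the first factor, `π_y` on the second. -/
def dE (q : ℂ) {L : Type} [Field L] (ι : ℂ →+* L) {n : ℕ} (ε : Fin n → Bool) (x y : L)
    (r : Fin n) : WW L ε →ₗ[L] WW L ε :=
  opT L LinearMap.id (eA q ι ε y r) + opT L (eA q ι ε x r) (kA q ι ε 1 r)

/-- `Δ'(e_r) = e_r⊗1 + k_r⊗e_r`. -/
def dE' (q : ℂ) {L : Type} [Field L] (ι : ℂ →+* L) {n : ℕ} (ε : Fin n → Bool) (x y : L)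
    (r : Fin n) : WW L ε →ₗ[L] WW L ε :=
  opT L (eA q ι ε x r) LinearMap.id + opT L (kA q ι ε 1 r) (eA q ι ε y r)

/-- `Δ(f_r) = f_r⊗1 + k_r⁻¹⊗f_r`. -/
def dF (q : ℂ) {L : Type} [Field L] (ι : ℂ →+* L) {n : ℕ} (ε : Fin n → Bool) (x y : L)
    (r : Fin n) : WW L ε →ₗ[L] WW L ε :=
  opT L (fA q ι ε x r) LinearMap.id + opT L (kA q ι ε (-1) r) (fA q ι ε y r)

/-- `Δ'(f_r) = 1⊗f_r + f_r⊗k_r⁻¹`. -/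
def dF' (q : ℂ) {L : Type} [Field L] (ι : ℂ →+* L) {n : ℕ} (ε : Fin n → Bool) (x y : L)
    (r : Fin n) : WW L ε →ₗ[L] WW L ε :=
  opT L LinearMap.id (fA q ι ε y r) + opT L (fA q ι ε x r) (kA q ι ε (-1) r)

/-- `Δ(k_r^s) = Δ'(k_r^s) = k_r^s ⊗ k_r^s`. -/
def dK (q : ℂ) {L : Type} [Field L] (ι : ℂ →+* L) {n : ℕ} (ε : Fin n → Bool) (s : ℤ)
    (r : Fin n) : WW L ε →ₗ[L] WW L ε :=
  opT L (kA q ι ε s r) (kA q ι ε s r)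

/-! ## Coproduct actions on `𝒲⊗𝒲` (type B) -/

def dEB (q pc : ℂ) {L : Type} [Field L] (ι : ℂ →+* L) {n : ℕ} (ε : Fin n → Bool) (x y : L)
    (r : Fin (n + 1)) : WW L ε →ₗ[L] WW L ε :=
  opT L LinearMap.id (eB q ι ε y r) + opT L (eB q ι ε x r) (kB q pc ι ε 1 r)

def dEB' (q pc : ℂ) {L : Type} [Field L] (ι : ℂ →+* L) {n : ℕ} (ε : Fin n → Bool) (x y : L)
    (r : Fin (n + 1)) : WW L ε →ₗ[L] WW L ε :=
  opT L (eB q ι ε x r) LinearMap.id + opT L (kB q pc ι ε 1 r) (eB q ι ε y r)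

def dFB (q pc : ℂ) {L : Type} [Field L] (ι : ℂ →+* L) {n : ℕ} (ε : Fin n → Bool) (x y : L)
    (r : Fin (n + 1)) : WW L ε →ₗ[L] WW L ε :=
  opT L (fB q ι ε x r) LinearMap.id + opT L (kB q pc ι ε (-1) r) (fB q ι ε y r)

def dFB' (q pc : ℂ) {L : Type} [Field L] (ι : ℂ →+* L) {n : ℕ} (ε : Fin n → Bool) (x y : L)
    (r : Fin (n + 1)) : WW L ε →ₗ[L] WW L ε :=
  opT L LinearMap.id (fB q ι ε y r) + opT L (fB q ι ε x r) (kB q pc ι ε (-1) r)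

def dKB (q pc : ℂ) {L : Type} [Field L] (ι : ℂ →+* L) {n : ℕ} (ε : Fin n → Bool) (s : ℤ)
    (r : Fin (n + 1)) : WW L ε →ₗ[L] WW L ε :=
  opT L (kB q pc ι ε s r) (kB q pc ι ε s r)

/-! ## Structure constants -/

/-- Type A structure constant `D_{i,j}` (as a product over 0-based positions). -/
def DA (q : ℂ) {n : ℕ} (ε : Fin n → Bool) (i j : Fin n) : ℂ :=
  ∏ p ∈ (({((i : ℕ) + n - 1) % n, (i : ℕ)} : Finset ℕ) ∩
      ({((j : ℕ) + n - 1) % n, (j : ℕ)} : Finset ℕ)),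
    qc q ε p ^ (if i = j then (1 : ℤ) else -1)

/-- The set `⟨i⟩ = {i, i+1} ∩ [1,n]` of type B, translated to 0-based positions. -/
def nodeB (n i : ℕ) : Finset ℕ :=
  if i = 0 then {0} else if i = n then {n - 1} else {i - 1, i}

/-- Type B structure constant `D_{i,j}`. -/
def DB (q : ℂ) {n : ℕ} (ε : Fin n → Bool) (i j : Fin (n + 1)) : ℂ :=
  ∏ p ∈ nodeB n (i : ℕ) ∩ nodeB n (j : ℕ), qc q ε p ^ (if i = j then (1 : ℤ) else -1)

/-! ## Distinguished vectors -/

/-- The vector `J_{n,j} = Σ_{i, Σi=j} q^{inv(i)} |i⟩⊗|1-i⟩`. -/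
def Jfull (q : ℂ) {L : Type} [Field L] (ι : ℂ →+* L) {n : ℕ} (ε : Fin n → Bool)
    (j : ℕ) : WW L ε :=
  ∑ i ∈ Fintype.piFinset (fun _ : Fin n => Finset.range 2),
    (if (∑ t, i t) = j then
        ι (q ^ (∑ s : Fin n, ∑ t : Fin n, if s < t then i s * (1 - i t) else 0))
      else 0) •
      kk L ε (fun t => (i t : ℤ)) (fun t => 1 - (i t : ℤ))

/-- Extension of a `Fin s`-tuple to `ℕ` by zero. -/
def ivf {s : ℕ} (i : Fin s → ℕ) : ℕ → ℕ := fun p => if h : p < s then i ⟨p, h⟩ else 0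

/-- `inv(i₁,…,i_s) = Σ_{p<r} i_p (1 - i_r)`. -/
def invv (s : ℕ) (iv : ℕ → ℕ) : ℕ :=
  ∑ p ∈ Finset.range s, ∑ r ∈ Finset.range s, if p < r then iv p * (1 - iv r) else 0

/-- Occupation vector `(0^{nn-s-t}, i₁,…,i_s, 1^t)`. -/
def winA (nn s t : ℕ) (iv : ℕ → ℕ) : Fin nn → ℤ := fun u =>
  if (u : ℕ) < nn - s - t then 0
  else if (u : ℕ) < nn - t then (iv ((u : ℕ) - (nn - s - t)) : ℤ)
  else 1

/-- The singular vector `ξ_t^{l,m}` for `κ = n`. -/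
def xiA (q : ℂ) {L : Type} [Field L] (ι : ℂ →+* L) {n : ℕ} (ε : Fin n → Bool)
    (l m t : ℕ) : WW L ε :=
  ∑ i ∈ Fintype.piFinset (fun _ : Fin (l + m - 2 * t) => Finset.range 2),
    (if (∑ u, i u) = l - t then ι (q ^ invv (l + m - 2 * t) (ivf i)) else 0) •
      kk L ε (winA n (l + m - 2 * t) t (ivf i))
        (winA n (l + m - 2 * t) t (fun p => 1 - ivf i p))

/-- Occupation vector `(0^{nn-s-1}, i₁,…,i_s, last)`. -/
def winA1 (nn s : ℕ) (iv : ℕ → ℕ) (last : ℤ) : Fin nn → ℤ := fun u =>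
  if (u : ℕ) < nn - s - 1 then 0
  else if (u : ℕ) < nn - 1 then (iv ((u : ℕ) - (nn - s - 1)) : ℤ)
  else last

/-- The singular vector `ξ_s^{l,m}` for `κ = n-1`. -/
def xiA1 (q : ℂ) {L : Type} [Field L] (ι : ℂ →+* L) {n : ℕ} (ε : Fin n → Bool)
    (l m s : ℕ) : WW L ε :=
  ∑ j ∈ Finset.range (s + 1),
    ∑ i ∈ Fintype.piFinset (fun _ : Fin s => Finset.range 2),
      (if (∑ u, i u) = s - j then
          ι ((-1 : ℂ) ^ j * q ^ (j * (m - s + 1)) * q ^ invv s (ivf i))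
        else 0) •
        kk L ε (winA1 n s (ivf i) ((l : ℤ) + (j : ℤ) - (s : ℤ)))
          (winA1 n s (fun p => 1 - ivf i p) ((m : ℤ) - (j : ℤ)))

/-- The singular vector `ξ_s^{l,m}` for `0 ≤ κ ≤ n-2`. -/
def xiA2 (q : ℂ) {L : Type} [Field L] (ι : ℂ →+* L) {n : ℕ} (ε : Fin n → Bool)
    (l m s : ℕ) : WW L ε :=
  ∑ j ∈ Finset.range (s + 1),
    ι ((-1 : ℂ) ^ j * q ^ ((j : ℤ) * (2 * (s : ℤ) - (m : ℤ) - (j : ℤ) - 1) + (m : ℤ) * (s : ℤ)) *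
        qbin q s j) •
      kk L ε
        (fun u => if (u : ℕ) < n - 2 then 0
          else if (u : ℕ) = n - 2 then (j : ℤ) else (l : ℤ) - (j : ℤ))
        (fun u => if (u : ℕ) < n - 2 then 0
          else if (u : ℕ) = n - 2 then (s : ℤ) - (j : ℤ) else (m : ℤ) - (s : ℤ) + (j : ℤ))

/-- The type B singular vector `ξ_l`. -/
def xiB (q pc : ℂ) {L : Type} [Field L] (ι : ℂ →+* L) {n : ℕ} (ε : Fin n → Bool)
    (l : ℕ) : WW L ε :=
  ∑ m ∈ Finset.range (l + 1),
    ι ((-pc) ^ (-(m : ℤ)) * q ^ ((m : ℤ) * (l : ℤ) - ((m * (m + 1) / 2 : ℕ) : ℤ)) *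
        qbin q l m) •
      kk L ε (fun u => if (u : ℕ) = n - 1 then (m : ℤ) else 0)
        (fun u => if (u : ℕ) = n - 1 then (l : ℤ) - (m : ℤ) else 0)

/-! ## Miscellany -/

/-- Apply a list of operators, the rightmost element of the list acting first. -/
def appList {L : Type} [Field L] {n : ℕ} {ε : Fin n → Bool}
    (ops : List (WW L ε →ₗ[L] WW L ε)) (v : WW L ε) : WW L ε :=
  ops.foldr (fun A w => A w) v

/-- A natural number as an element of `Fin n`. -/
def mfin {n : ℕ} [NeZero n] (p : ℕ) : Fin n :=
  ⟨p % n, Nat.mod_lt p (Nat.pos_of_ne_zero (NeZero.ne n))⟩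

/-- Reference weight-`l` occupation vector: `(0^{n-l},1^l)` if `κ = n`, `l·e_n` otherwise. -/
def refAN (n κ l : ℕ) : Fin n → ℕ := fun t =>
  if κ = n then (if n - l ≤ (t : ℕ) then 1 else 0) else (if (t : ℕ) = n - 1 then l else 0)

/-- The flip `P(u⊗v) = v⊗u` on `𝒲⊗𝒲`. -/
def Pop (L : Type) [Field L] {n : ℕ} (ε : Fin n → Bool) : WW L ε →ₗ[L] WW L ε :=
  mkEnd L fun p => Finsupp.single (p.2, p.1) 1

/-! ### Matrix elements of the operators -/

lemma tens_apply {L : Type} [Field L] {n : ℕ} {ε : Fin n → Bool} (u w : W L ε)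
    (p : Idx ε × Idx ε) : tens L u w p = u p.1 * w p.2 := by
  classical
  unfold tens
  rw [Finsupp.sum_apply]
  simp only [Finsupp.sum_apply, Finsupp.single_apply]
  rw [Finsupp.sum, Finset.sum_eq_single p.1]
  · rw [Finsupp.sum, Finset.sum_eq_single p.2]
    · simp
    · intro b _ hb
      exact if_neg fun h => hb (congrArg Prod.snd h)
    · intro h
      simp [Finsupp.notMem_support_iff.mp h]
  · intro a _ ha
    exact Finset.sum_eq_zero fun b _ => if_neg fun h => ha (congrArg Prod.fst h)
  · intro h
    simp [Finsupp.notMem_support_iff.mp h, Finsupp.sum]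

lemma mkEnd_apply {L : Type} [Field L] {α : Type} (f : α → (α →₀ L)) (v : α →₀ L) (p : α) :
    mkEnd L f v p = v.sum fun s c => c * f s p := by
  unfold mkEnd
  simp [Finsupp.lsum_apply, Finsupp.sum_apply]

lemma mkEnd_single {L : Type} [Field L] {α : Type} (f : α → (α →₀ L)) (s : α) :
    mkEnd L f (Finsupp.single s 1) = f s := by
  simp [mkEnd]

lemma opT_apply {L : Type} [Field L] {n : ℕ} {ε : Fin n → Bool}
    (A B : W L ε →ₗ[L] W L ε) (v : WW L ε) (p : Idx ε × Idx ε) :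
    opT L A B v p = v.sum fun s c =>
      c * (A (Finsupp.single s.1 1) p.1 * B (Finsupp.single s.2 1) p.2) := by
  unfold opT
  simp only [mkEnd_apply, tens_apply]

lemma ket_apply {L : Type} [Field L] {n : ℕ} {ε : Fin n → Bool} (m : Fin n → ℤ) (a : Idx ε) :
    ket L ε m a = if ∀ t, (a.1 t : ℤ) = m t then 1 else 0 := by
  classical
  unfold ket
  split_ifs with h1 h2 h2
  · refine Finsupp.single_apply.trans (if_pos ?_)
    apply Subtype.ext
    funext t
    simp [← h2 t]
  · refine Finsupp.single_apply.trans (if_neg ?_)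
    rintro rfl
    exact h2 fun t => Int.toNat_of_nonneg (h1.1 t)
  · exfalso
    apply h1
    refine ⟨fun t => by rw [← h2 t]; positivity, fun t ht => ?_⟩
    simpa [← h2 t] using a.2 t ht
  · rfl

lemma kk_apply {L : Type} [Field L] {n : ℕ} {ε : Fin n → Bool} (m m' : Fin n → ℤ)
    (p : Idx ε × Idx ε) :
    kk L ε m m' p = if ∀ t, (p.1.1 t : ℤ) = m t ∧ (p.2.1 t : ℤ) = m' t then 1 else 0 := by
  classical
  unfold kk
  split_ifs with h1 h2 h2
  · refine Finsupp.single_apply.trans (if_pos ?_)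
    refine Prod.ext (Subtype.ext ?_) (Subtype.ext ?_)
    · funext t
      simp [← (h2 t).1]
    · funext t
      simp [← (h2 t).2]
  · refine Finsupp.single_apply.trans (if_neg ?_)
    rintro rfl
    exact h2 fun t => ⟨Int.toNat_of_nonneg (h1.1.1 t), Int.toNat_of_nonneg (h1.2.1 t)⟩
  · exfalso
    apply h1
    refine ⟨⟨fun t => by rw [← (h2 t).1]; positivity, fun t ht => ?_⟩,
      ⟨fun t => by rw [← (h2 t).2]; positivity, fun t ht => ?_⟩⟩
    · simpa [← (h2 t).1] using p.1.2 t ht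
    · simpa [← (h2 t).2] using p.2.2 t ht
  · rfl

/-- Eigenvalue of the type B generator `k_r` on `|m⟩`. -/
def kval (q pc : ℂ) {n : ℕ} (ε : Fin n → Bool) (r : Fin (n + 1)) (m : Fin n → ℕ) : ℂ :=
  if (r : ℕ) = 0 then pc⁻¹ * qc q ε 0 ^ (av m 0 : ℤ)
  else if (r : ℕ) = n then pc * qc q ε (n - 1) ^ (-(av m (n - 1) : ℤ))
  else qc q ε ((r : ℕ) - 1) ^ (-(av m ((r : ℕ) - 1) : ℤ)) * qc q ε (r : ℕ) ^ (av m (r : ℕ) : ℤ)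

lemma kB_single (q pc : ℂ) {L : Type} [Field L] (ι : ℂ →+* L) {n : ℕ} (ε : Fin n → Bool)
    (r : Fin (n + 1)) (m : Idx ε) :
    kB q pc ι ε 1 r (Finsupp.single m 1) = ι (kval q pc ε r m.1) • Finsupp.single m 1 := by
  simp only [kB, mkEnd_single, zpow_one, kval]

/-- For `r ≠ 0` one formula covers both the hopping operators and the annihilation operator
`e_n`, because `dlt n` vanishes on `Fin n`. -/
lemma eB_single (q : ℂ) {L : Type} [Field L] (ι : ℂ →+* L) {n : ℕ} (ε : Fin n → Bool) (x : L)
    (r : Fin (n + 1)) (hr : (r : ℕ) ≠ 0) (m : Idx ε) :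
    eB q ι ε x r (Finsupp.single m 1) = ι (qnum q (av m.1 ((r : ℕ) - 1))) •
      ket L ε (fun t => (m.1 t : ℤ) - dlt ((r : ℕ) - 1) t + dlt (r : ℕ) t) := by
  simp only [eB, mkEnd_single, if_neg hr]
  split_ifs with h
  · rw [h]
    congr 2
    funext t
    simp [dlt, t.2.ne]
  · rfl

/-- `e_r` sends `|m⟩` to a multiple of `|m'⟩`: one quantum leaves site `r` and, unless `r = n`,
reappears at site `r + 1` (0-based: from `r - 1` to `r`). -/
def Hop {n : ℕ} {ε : Fin n → Bool} (r : Fin (n + 1)) (m m' : Idx ε) : Prop :=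
  ∀ t, (m'.1 t : ℤ) = (m.1 t : ℤ) - dlt ((r : ℕ) - 1) t + dlt (r : ℕ) t

lemma Hop.inj {n : ℕ} {ε : Fin n → Bool} {r : Fin (n + 1)} {m₁ m₂ m' : Idx ε}
    (h₁ : Hop r m₁ m') (h₂ : Hop r m₂ m') : m₁ = m₂ := by
  apply Subtype.ext
  funext t
  have := h₁ t
  have := h₂ t
  omega

section Coefficients

variable {q pc : ℂ} {L : Type} [Field L] {ι : ℂ →+* L} {n : ℕ} {ε : Fin n → Bool} {x y : L}

open Classical in
lemma dEB_apply (v : WW L ε) (r : Fin (n + 1)) (hr : (r : ℕ) ≠ 0) (a b : Idx ε) :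
    dEB q pc ι ε x y r v (a, b) =
      (v.sum fun s c => if s.1 = a ∧ Hop r s.2 b then
        c * ι (qnum q (av s.2.1 ((r : ℕ) - 1))) else 0) +
      (v.sum fun s c => if s.2 = b ∧ Hop r s.1 a then
        c * (ι (qnum q (av s.1.1 ((r : ℕ) - 1))) * ι (kval q pc ε r b.1)) else 0) := by
  unfold dEB
  rw [LinearMap.add_apply, Finsupp.add_apply, opT_apply, opT_apply]
  congr 1
  · refine Finsupp.sum_congr fun s _ => ?_
    simp only [LinearMap.id_apply, eB_single q ι ε y r hr, Finsupp.smul_apply, ket_apply,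
      Finsupp.single_apply, smul_eq_mul, Hop]
    split_ifs <;> simp_all
  · refine Finsupp.sum_congr fun s _ => ?_
    simp only [kB_single, eB_single q ι ε x r hr, Finsupp.smul_apply, ket_apply,
      Finsupp.single_apply, smul_eq_mul, Hop]
    split_ifs <;> simp_all

open Classical in
lemma sum_hop_right (v : WW L ε) (r : Fin (n + 1)) (a b b₀ : Idx ε) (h : Hop r b₀ b)
    (g : Idx ε × Idx ε → L) :
    (v.sum fun s c => if s.1 = a ∧ Hop r s.2 b then c * g s else 0) = v (a, b₀) * g (a, b₀) := by
  rw [Finsupp.sum, Finset.sum_eq_single (a, b₀)]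
  · rw [if_pos ⟨rfl, h⟩]
  · rintro ⟨s₁, s₂⟩ _ hs
    refine if_neg ?_
    rintro ⟨rfl, h'⟩
    exact hs (by rw [h.inj h'])
  · intro h0
    simp [Finsupp.notMem_support_iff.mp h0]

open Classical in
lemma sum_hop_left (v : WW L ε) (r : Fin (n + 1)) (a b a₀ : Idx ε) (h : Hop r a₀ a)
    (g : Idx ε × Idx ε → L) :
    (v.sum fun s c => if s.2 = b ∧ Hop r s.1 a then c * g s else 0) = v (a₀, b) * g (a₀, b) := by
  rw [Finsupp.sum, Finset.sum_eq_single (a₀, b)]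
  · rw [if_pos ⟨rfl, h⟩]
  · rintro ⟨s₁, s₂⟩ _ hs
    refine if_neg ?_
    rintro ⟨rfl, h'⟩
    exact hs (by rw [h.inj h'])
  · intro h0
    simp [Finsupp.notMem_support_iff.mp h0]

/-- Coefficient of `Δ(e_r) v` when the second factor was hit by `e_r` and the first factor
cannot have been. -/
lemma dEB_apply_right (v : WW L ε) (r : Fin (n + 1)) (hr : (r : ℕ) ≠ 0) (a b b₀ : Idx ε)
    (h : Hop r b₀ b) (hno : ∀ a₀, ¬ Hop r a₀ a) :
    dEB q pc ι ε x y r v (a, b) = v (a, b₀) * ι (qnum q (av b₀.1 ((r : ℕ) - 1))) := by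
  classical
  rw [dEB_apply v r hr, sum_hop_right v r a b b₀ h (fun s => ι (qnum q (av s.2.1 ((r : ℕ) - 1))))]
  simp [hno]

/-- Coefficient of `Δ(e_r) v` when the first factor was hit by `e_r` and the second factor
cannot have been. -/
lemma dEB_apply_left (v : WW L ε) (r : Fin (n + 1)) (hr : (r : ℕ) ≠ 0) (a b a₀ : Idx ε)
    (h : Hop r a₀ a) (hno : ∀ b₀, ¬ Hop r b₀ b) :
    dEB q pc ι ε x y r v (a, b) =
      v (a₀, b) * (ι (qnum q (av a₀.1 ((r : ℕ) - 1))) * ι (kval q pc ε r b.1)) := by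
  classical
  rw [dEB_apply v r hr, sum_hop_left v r a b a₀ h
    (fun s => ι (qnum q (av s.1.1 ((r : ℕ) - 1))) * ι (kval q pc ε r b.1))]
  simp [hno]

lemma dEB_apply_both (v : WW L ε) (r : Fin (n + 1)) (hr : (r : ℕ) ≠ 0) (a b a₀ b₀ : Idx ε)
    (ha : Hop r a₀ a) (hb : Hop r b₀ b) :
    dEB q pc ι ε x y r v (a, b) = v (a, b₀) * ι (qnum q (av b₀.1 ((r : ℕ) - 1))) +
      v (a₀, b) * (ι (qnum q (av a₀.1 ((r : ℕ) - 1))) * ι (kval q pc ε r b.1)) := by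
  classical
  rw [dEB_apply v r hr, sum_hop_left v r a b a₀ ha
    (fun s => ι (qnum q (av s.1.1 ((r : ℕ) - 1))) * ι (kval q pc ε r b.1)),
    sum_hop_right v r a b b₀ hb (fun s => ι (qnum q (av s.2.1 ((r : ℕ) - 1))))]

lemma dKB_apply (v : WW L ε) (r : Fin (n + 1)) (a b : Idx ε) :
    dKB q pc ι ε 1 r v (a, b) =
      v (a, b) * (ι (kval q pc ε r a.1) * ι (kval q pc ε r b.1)) := by
  classical
  unfold dKB
  rw [opT_apply, Finsupp.sum, Finset.sum_eq_single (a, b)]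
  · simp [kB_single]
  · rintro ⟨s₁, s₂⟩ _ hs
    simp only [kB_single, Finsupp.smul_apply, Finsupp.single_apply, smul_eq_mul]
    split_ifs <;> simp_all
  · intro h0
    simp [Finsupp.notMem_support_iff.mp h0]

end Coefficients

/-! ### Changing one occupation number -/

/-- The label `m` with its entry at the bosonic site `N` replaced by `k`. -/
def upd {n : ℕ} {ε : Fin n → Bool} {N : Fin n} (hN : ε N = false) (m : Idx ε) (k : ℕ) : Idx ε :=
  ⟨Function.update m.1 N k, fun t ht => by
    have h : t ≠ N := by
      rintro rfl
      simp [hN] at ht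
    simpa [h] using m.2 t ht⟩

@[simp]
lemma upd_self {n : ℕ} {ε : Fin n → Bool} {N : Fin n} (hN : ε N = false) (m : Idx ε) (k : ℕ) :
    (upd hN m k).1 N = k := by
  simp [upd]

lemma upd_ne {n : ℕ} {ε : Fin n → Bool} {N : Fin n} (hN : ε N = false) (m : Idx ε) (k : ℕ)
    {t : Fin n} (ht : t ≠ N) : (upd hN m k).1 t = m.1 t := by
  simp [upd, ht]

lemma eq_upd {n : ℕ} {ε : Fin n → Bool} {N : Fin n} (hN : ε N = false) (m m' : Idx ε) (k : ℕ)
    (h : m'.1 N = k) (h' : ∀ t, t ≠ N → m'.1 t = m.1 t) : m' = upd hN m k := by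
  apply Subtype.ext
  funext t
  by_cases ht : t = N
  · subst ht
    simpa using h
  · rw [h' t ht, upd_ne hN m k ht]

lemma av_fin {n : ℕ} (m : Fin n → ℕ) (t : Fin n) : av m (t : ℕ) = m t := by
  simp [av]

lemma qc_ne_zero {q : ℂ} (hq0 : q ≠ 0) {n : ℕ} (ε : Fin n → Bool) (p : ℕ) : qc q ε p ≠ 0 := by
  unfold qc
  split_ifs <;> simp [hq0]

lemma kval_ne_zero {q pc : ℂ} (hq0 : q ≠ 0) (hp : pc ≠ 0) {n : ℕ} (ε : Fin n → Bool)
    (r : Fin (n + 1)) (m : Fin n → ℕ) : kval q pc ε r m ≠ 0 := by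
  have h := qc_ne_zero hq0 ε
  unfold kval
  split_ifs
  · exact mul_ne_zero (inv_ne_zero hp) (zpow_ne_zero _ (h _))
  · exact mul_ne_zero hp (zpow_ne_zero _ (h _))
  · exact mul_ne_zero (zpow_ne_zero _ (h _)) (zpow_ne_zero _ (h _))

/-! ### Quantum integers and the coefficients of `ξ_l` -/

lemma qnum_ne_zero {q : ℂ} (hq0 : q ≠ 0) (hq : ∀ k : ℕ, k ≠ 0 → q ^ k ≠ 1) {m : ℕ} (hm : m ≠ 0) :
    qnum q m ≠ 0 := by
  have key : ∀ k : ℕ, k ≠ 0 → q ^ k - q⁻¹ ^ k ≠ 0 := by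
    intro k hk h
    apply hq (2 * k) (by omega)
    rw [sub_eq_zero, inv_pow] at h
    rw [two_mul, pow_add]
    nth_rewrite 1 [h]
    exact inv_mul_cancel₀ (pow_ne_zero _ hq0)
  unfold qnum
  refine div_ne_zero (key m hm) ?_
  simpa using key 1 one_ne_zero

lemma qnum_zero (q : ℂ) : qnum q 0 = 0 := by simp [qnum]

lemma qfac_succ (q : ℂ) (m : ℕ) : qfac q (m + 1) = qfac q m * qnum q (m + 1) := by
  simp [qfac, Finset.prod_range_succ]

lemma qfac_ne_zero {q : ℂ} (hq0 : q ≠ 0) (hq : ∀ k : ℕ, k ≠ 0 → q ^ k ≠ 1) (m : ℕ) :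
    qfac q m ≠ 0 :=
  Finset.prod_ne_zero_iff.mpr fun _ _ => qnum_ne_zero hq0 hq (Nat.succ_ne_zero _)

/-- Coefficient of `|m·e_n⟩ ⊗ |(l-m)·e_n⟩` in `ξ_l`. -/
def xiCoef (q pc : ℂ) (l m : ℕ) : ℂ :=
  (-pc) ^ (-(m : ℤ)) * q ^ ((m : ℤ) * (l : ℤ) - ((m * (m + 1) / 2 : ℕ) : ℤ)) * qbin q l m

lemma xiCoef_zero {q : ℂ} (pc : ℂ) (hq0 : q ≠ 0) (hq : ∀ k : ℕ, k ≠ 0 → q ^ k ≠ 1) (l : ℕ) :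
    xiCoef q pc l 0 = 1 := by
  have h := qfac_ne_zero hq0 hq l
  have h0 : qfac q 0 = 1 := by simp [qfac]
  simp [xiCoef, qbin, h0, h]

/-- The two-term recurrence expressing `Δ(e_n) ξ_l = 0`, with `l = m + j + 1`. -/
lemma xiCoef_succ {q pc : ℂ} (hp : pc ≠ 0) (hq0 : q ≠ 0) (hq : ∀ k : ℕ, k ≠ 0 → q ^ k ≠ 1)
    (m j : ℕ) :
    xiCoef q pc (m + j + 1) m * qnum q (j + 1) +
      xiCoef q pc (m + j + 1) (m + 1) * (qnum q (m + 1) * (pc * q ^ (-(j : ℤ)))) = 0 := by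
  have hb : qbin q (m + j + 1) (m + 1) * qnum q (m + 1) =
      qbin q (m + j + 1) m * qnum q (j + 1) := by
    have e1 : m + j + 1 - (m + 1) = j := by omega
    have e2 : m + j + 1 - m = j + 1 := by omega
    have := qfac_ne_zero hq0 hq m
    have := qfac_ne_zero hq0 hq j
    have := qnum_ne_zero hq0 hq (Nat.succ_ne_zero m)
    have := qnum_ne_zero hq0 hq (Nat.succ_ne_zero j)
    simp only [qbin, e1, e2, if_pos (show m + 1 ≤ m + j + 1 by omega),
      if_pos (show m ≤ m + j + 1 by omega), qfac_succ q m, qfac_succ q j]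
    field_simp
  have ht : (m + 1) * (m + 1 + 1) / 2 = m * (m + 1) / 2 + (m + 1) := by
    rw [show (m + 1) * (m + 1 + 1) = m * (m + 1) + (m + 1) * 2 by ring]
    exact Nat.add_mul_div_right _ _ two_pos
  have hpow : (-pc) ^ (-((m + 1 : ℕ) : ℤ)) * pc = - (-pc) ^ (-(m : ℤ)) := by
    have hn : -pc ≠ 0 := neg_ne_zero.mpr hp
    rw [show (-(m : ℤ)) = -((m + 1 : ℕ) : ℤ) + 1 by push_cast; ring, zpow_add_one₀ hn]
    ring
  have hqp : q ^ (((m + 1 : ℕ) : ℤ) * ((m + j + 1 : ℕ) : ℤ) -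
        (((m + 1) * (m + 1 + 1) / 2 : ℕ) : ℤ)) * q ^ (-(j : ℤ)) =
      q ^ ((m : ℤ) * ((m + j + 1 : ℕ) : ℤ) - ((m * (m + 1) / 2 : ℕ) : ℤ)) := by
    rw [← zpow_add₀ hq0, ht]
    congr 1
    push_cast
    ring
  unfold xiCoef
  rw [← hqp]
  linear_combination
    (-pc) ^ (-((m + 1 : ℕ) : ℤ)) * pc * q ^ (((m + 1 : ℕ) : ℤ) * ((m + j + 1 : ℕ) : ℤ) -
        (((m + 1) * (m + 1 + 1) / 2 : ℕ) : ℤ)) * q ^ (-(j : ℤ)) * hb +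
    q ^ (((m + 1 : ℕ) : ℤ) * ((m + j + 1 : ℕ) : ℤ) -
        (((m + 1) * (m + 1 + 1) / 2 : ℕ) : ℤ)) * q ^ (-(j : ℤ)) *
        qbin q (m + j + 1) m * qnum q (j + 1) * hpow

/-! ### Vectors annihilated by all `Δ(e_i)` -/

/-- A quantum may hop from an occupied site `j` to `t = j + 1` unless `t` is fermionic and
already occupied. -/
lemma exists_hop {n : ℕ} {ε : Fin n → Bool} {j t : Fin n} {r : Fin (n + 1)}
    (hr : (r : ℕ) = (j : ℕ) + 1) (ht : (t : ℕ) = (j : ℕ) + 1) (m : Idx ε) (hj : m.1 j ≠ 0)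
    (hmt : ε t = true → m.1 t = 0) : ∃ m' : Idx ε, Hop r m m' := by
  have hjt : j ≠ t := by
    rintro rfl
    omega
  refine ⟨⟨Function.update (Function.update m.1 j (m.1 j - 1)) t (m.1 t + 1), fun s hs => ?_⟩,
    fun s => ?_⟩
  · by_cases h : s = t
    · subst h
      simp [hmt hs]
    · by_cases h' : s = j
      · subst h'
        have := m.2 s hs
        simp [h]
        omega
      · simpa [h, h'] using m.2 s hs
  · by_cases h : s = t
    · subst h
      simp [dlt, hr, ht]
    · have h1 : (s : ℕ) ≠ (j : ℕ) + 1 := fun e => h (Fin.ext (e.trans ht.symm))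
      by_cases h' : s = j
      · subst h'
        simp [h, dlt, hr]
        omega
      · have h2 : (s : ℕ) ≠ (j : ℕ) := fun e => h' (Fin.ext e)
        simp [h, h', dlt, hr, h1, h2]

lemma not_hop {n : ℕ} {ε : Fin n → Bool} {t : Fin n} {r : Fin (n + 1)}
    (hr : (r : ℕ) = (t : ℕ)) (hr0 : (r : ℕ) ≠ 0) (m m' : Idx ε) (h : m'.1 t = 0) :
    ¬ Hop r m m' := by
  intro hh
  have := hh t
  have h1 : (t : ℕ) ≠ (t : ℕ) - 1 := by omega
  rw [h, dlt, dlt, hr, if_neg h1, if_pos rfl] at this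
  omega

/-- The unique source of `|m⟩` under the annihilation operator `e_n`. -/
lemma hop_last {n : ℕ} {ε : Fin n → Bool} {N : Fin n} (hN : ε N = false)
    (hNn : (N : ℕ) = n - 1) (m : Idx ε) : Hop (Fin.last n) (upd hN m (m.1 N + 1)) m := by
  intro t
  have h0 : (t : ℕ) ≠ n := t.2.ne
  by_cases h : t = N
  · subst h
    simp [dlt, hNn]
    omega
  · have h1 : (t : ℕ) ≠ n - 1 := fun e => h (Fin.ext (e.trans hNn.symm))
    simp [dlt, upd_ne hN _ _ h, h0, h1]

section Kernel

variable {q pc : ℂ} {L : Type} [Field L] {ι : ℂ →+* L} {n : ℕ} {ε : Fin n → Bool} {x y : L}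
  {N : Fin n}

lemma kval_last (hN : ε N = false) (hNn : (N : ℕ) = n - 1) (m : Idx ε) :
    kval q pc ε (Fin.last n) m.1 = pc * q ^ (-(m.1 N : ℤ)) := by
  have hn : n ≠ 0 := by
    have := N.2
    omega
  have hq : qc q ε (n - 1) = q := by
    rw [← hNn]
    simp [qc, hN]
  rw [kval, if_neg (by simpa using hn), if_pos (Fin.val_last n), hq, ← hNn, av_fin]

/-- `Δ(e_n)` only sees the occupation numbers at the last site. -/
lemma dEB_last_apply (hN : ε N = false) (hNn : (N : ℕ) = n - 1) (v : WW L ε) (a b : Idx ε) :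
    dEB q pc ι ε x y (Fin.last n) v (a, b) =
      v (a, upd hN b (b.1 N + 1)) * ι (qnum q (b.1 N + 1)) +
      v (upd hN a (a.1 N + 1), b) * (ι (qnum q (a.1 N + 1)) * ι (pc * q ^ (-(b.1 N : ℤ)))) := by
  have hn : n ≠ 0 := by
    have := N.2
    omega
  rw [dEB_apply_both v _ (by simpa using hn) a b _ _ (hop_last hN hNn a) (hop_last hN hNn b),
    kval_last hN hNn,
    Fin.val_last, ← hNn, av_fin, av_fin, upd_self, upd_self]

/-- Since all the scalars in the two-term relation of `dEB_last_apply` are nonzero, the kernel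
condition propagates (non)vanishing when a quantum at the last site changes factor. -/
lemma shift_iff (hq0 : q ≠ 0) (hp : pc ≠ 0) (hq : ∀ k : ℕ, k ≠ 0 → q ^ k ≠ 1)
    (hN : ε N = false) (hNn : (N : ℕ) = n - 1) (v : WW L ε)
    (hv : dEB q pc ι ε x y (Fin.last n) v = 0) (a b : Idx ε) :
    v (a, upd hN b (b.1 N + 1)) = 0 ↔ v (upd hN a (a.1 N + 1), b) = 0 := by
  have h := dEB_last_apply (q := q) (pc := pc) (ι := ι) (x := x) (y := y) hN hNn v a b
  rw [hv, Finsupp.zero_apply] at h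
  have hb : ι (qnum q (b.1 N + 1)) ≠ 0 :=
    (map_ne_zero ι).mpr (qnum_ne_zero hq0 hq (Nat.succ_ne_zero _))
  have ha : ι (qnum q (a.1 N + 1)) ≠ 0 :=
    (map_ne_zero ι).mpr (qnum_ne_zero hq0 hq (Nat.succ_ne_zero _))
  constructor <;> intro h0 <;> rw [h0] at h <;> simpa [ha, hb, hp, hq0] using h

/-- All quanta at the last site can be moved into the second factor without leaving the support
of a vector killed by `Δ(e_n)`. -/
lemma exists_shift_right (hq0 : q ≠ 0) (hp : pc ≠ 0) (hq : ∀ k : ℕ, k ≠ 0 → q ^ k ≠ 1)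
    (hN : ε N = false) (hNn : (N : ℕ) = n - 1) (v : WW L ε)
    (hv : dEB q pc ι ε x y (Fin.last n) v = 0) (k : ℕ) (a b : Idx ε) (hk : a.1 N = k)
    (hab : v (a, b) ≠ 0) : ∃ a' b' : Idx ε, v (a', b') ≠ 0 ∧ a'.1 N = 0 ∧
      ∀ t, t ≠ N → a'.1 t = a.1 t ∧ b'.1 t = b.1 t := by
  induction k generalizing a b with
  | zero => exact ⟨a, b, hab, hk, fun t _ => ⟨rfl, rfl⟩⟩
  | succ k ih =>
    have ha : a = upd hN (upd hN a k) ((upd hN a k).1 N + 1) :=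
      eq_upd hN _ _ _ (by simpa using hk) fun t ht => (upd_ne hN a k ht).symm
    have h : v (upd hN a k, upd hN b (b.1 N + 1)) ≠ 0 := by
      rw [Ne, shift_iff hq0 hp hq hN hNn v hv, ← ha]
      exact hab
    obtain ⟨a', b', h1, h2, h3⟩ := ih _ _ (upd_self hN a k) h
    refine ⟨a', b', h1, h2, fun t ht => ?_⟩
    rw [(h3 t ht).1, (h3 t ht).2, upd_ne hN _ _ ht, upd_ne hN _ _ ht]
    exact ⟨rfl, rfl⟩

/-- All quanta at the last site can be moved into the first factor without leaving the support
of a vector killed by `Δ(e_n)`. -/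
lemma exists_shift_left (hq0 : q ≠ 0) (hp : pc ≠ 0) (hq : ∀ k : ℕ, k ≠ 0 → q ^ k ≠ 1)
    (hN : ε N = false) (hNn : (N : ℕ) = n - 1) (v : WW L ε)
    (hv : dEB q pc ι ε x y (Fin.last n) v = 0) (k : ℕ) (a b : Idx ε) (hk : b.1 N = k)
    (hab : v (a, b) ≠ 0) : ∃ a' b' : Idx ε, v (a', b') ≠ 0 ∧ b'.1 N = 0 ∧
      ∀ t, t ≠ N → a'.1 t = a.1 t ∧ b'.1 t = b.1 t := by
  induction k generalizing a b with
  | zero => exact ⟨a, b, hab, hk, fun t _ => ⟨rfl, rfl⟩⟩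
  | succ k ih =>
    have hb : b = upd hN (upd hN b k) ((upd hN b k).1 N + 1) :=
      eq_upd hN _ _ _ (by simpa using hk) fun t ht => (upd_ne hN b k ht).symm
    have h : v (upd hN a (a.1 N + 1), upd hN b k) ≠ 0 := by
      rw [Ne, ← shift_iff hq0 hp hq hN hNn v hv, ← hb]
      exact hab
    obtain ⟨a', b', h1, h2, h3⟩ := ih _ _ (upd_self hN b k) h
    refine ⟨a', b', h1, h2, fun t ht => ?_⟩
    rw [(h3 t ht).1, (h3 t ht).2, upd_ne hN _ _ ht, upd_ne hN _ _ ht]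
    exact ⟨rfl, rfl⟩

/-- If site `t = j + 1` is empty in the first factor, `Δ(e_{j+1}) v = 0` forces site `j` to be
empty in the second factor: the image of `|a⟩ ⊗ |b⟩` under `1 ⊗ e` then has no other source. -/
lemma empty_right (hq0 : q ≠ 0) (hq : ∀ k : ℕ, k ≠ 0 → q ^ k ≠ 1) {j t : Fin n}
    {r : Fin (n + 1)} (hr : (r : ℕ) = (j : ℕ) + 1) (ht : (t : ℕ) = (j : ℕ) + 1) (v : WW L ε)
    (hv : dEB q pc ι ε x y r v = 0) (a b : Idx ε) (hab : v (a, b) ≠ 0) (ha : a.1 t = 0)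
    (hb : ε t = true → b.1 t = 0) : b.1 j = 0 := by
  by_contra hj
  -- the vanishing coefficient of `Δ(e_r) v` is read off at `(a, b')`, where `e_r` maps `b` to `b'`
  obtain ⟨b', hb'⟩ := exists_hop hr ht b hj hb
  have h := dEB_apply_right (q := q) (pc := pc) (ι := ι) (x := x) (y := y) v r (by omega) a b' b
    hb' fun a₀ => not_hop (hr.trans ht.symm) (by omega) a₀ a ha
  rw [hv, Finsupp.zero_apply, hr, Nat.add_sub_cancel, av_fin] at h
  exact mul_ne_zero hab ((map_ne_zero ι).mpr (qnum_ne_zero hq0 hq hj)) h.symm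

/-- The mirror image of `empty_right`, with the image of `|a⟩ ⊗ |b⟩` under `e ⊗ k`. -/
lemma empty_left (hq0 : q ≠ 0) (hp : pc ≠ 0) (hq : ∀ k : ℕ, k ≠ 0 → q ^ k ≠ 1) {j t : Fin n}
    {r : Fin (n + 1)} (hr : (r : ℕ) = (j : ℕ) + 1) (ht : (t : ℕ) = (j : ℕ) + 1) (v : WW L ε)
    (hv : dEB q pc ι ε x y r v = 0) (a b : Idx ε) (hab : v (a, b) ≠ 0) (hb : b.1 t = 0)
    (ha : ε t = true → a.1 t = 0) : a.1 j = 0 := by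
  by_contra hj
  obtain ⟨a', ha'⟩ := exists_hop hr ht a hj ha
  have h := dEB_apply_left (q := q) (pc := pc) (ι := ι) (x := x) (y := y) v r (by omega) a' b a
    ha' fun b₀ => not_hop (hr.trans ht.symm) (by omega) b₀ b hb
  rw [hv, Finsupp.zero_apply, hr, Nat.add_sub_cancel, av_fin] at h
  exact mul_ne_zero hab (mul_ne_zero ((map_ne_zero ι).mpr (qnum_ne_zero hq0 hq hj))
    ((map_ne_zero ι).mpr (kval_ne_zero hq0 hp _ _ _))) h.symm

/-- A vector killed by all `Δ(e_i)`, `1 ≤ i ≤ n`, is supported on labels whose only occupied site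
is the last one. The induction runs over the distance `d` of `j + 1` from the last site. -/
lemma support_last (hq0 : q ≠ 0) (hp : pc ≠ 0) (hq : ∀ k : ℕ, k ≠ 0 → q ^ k ≠ 1)
    (hN : ε N = false) (hNn : (N : ℕ) = n - 1) (v : WW L ε)
    (hv : ∀ i : Fin (n + 1), (i : ℕ) ≠ 0 → dEB q pc ι ε x y i v = 0) (d : ℕ) (j : Fin n)
    (hj : (j : ℕ) + 1 + d = N) (a b : Idx ε) (hab : v (a, b) ≠ 0) :
    a.1 j = 0 ∧ b.1 j = 0 := by
  have hNlt := N.2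
  induction d generalizing j a b with
  | zero =>
    have hjN : j ≠ N := by
      rintro rfl
      omega
    have hr := hv ⟨(j : ℕ) + 1, by omega⟩ (Nat.succ_ne_zero _)
    have hlast := hv (Fin.last n) (by simp; omega)
    constructor
    · obtain ⟨a', b', h1, h2, h3⟩ := exists_shift_left hq0 hp hq hN hNn v hlast _ a b rfl hab
      rw [← (h3 j hjN).1]
      exact empty_left (t := N) hq0 hp hq rfl (by omega) v hr a' b' h1 h2 (by simp [hN])
    · obtain ⟨a', b', h1, h2, h3⟩ := exists_shift_right hq0 hp hq hN hNn v hlast _ a b rfl hab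
      rw [← (h3 j hjN).2]
      exact empty_right (t := N) hq0 hq rfl (by omega) v hr a' b' h1 h2 (by simp [hN])
  | succ d ih =>
    obtain ⟨ha, hb⟩ := ih ⟨(j : ℕ) + 1, by omega⟩ (by simp; omega) a b hab
    have hr := hv ⟨(j : ℕ) + 1, by omega⟩ (Nat.succ_ne_zero _)
    exact ⟨empty_left hq0 hp hq rfl rfl v hr a b hab hb fun _ => ha,
      empty_right hq0 hq rfl rfl v hr a b hab ha fun _ => hb⟩

/-! ### The vectors `ξ_l` -/

/-- The label of `|m·e_n⟩`, with `N` the last site. -/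
def lastIdx (hN : ε N = false) (m : ℕ) : Idx ε := upd hN ⟨fun _ => 0, fun _ _ => Nat.zero_le 1⟩ m

lemma xiB_apply (hN : ε N = false) (hNn : (N : ℕ) = n - 1) (l : ℕ) (a b : Idx ε) :
    xiB q pc ι ε l (a, b) =
      if (∀ t, t ≠ N → a.1 t = 0 ∧ b.1 t = 0) ∧ a.1 N + b.1 N = l then
        ι (xiCoef q pc l (a.1 N)) else 0 := by
  have hval : ∀ t : Fin n, (t : ℕ) = n - 1 ↔ t = N := fun t => by
    rw [← hNn, Fin.ext_iff]
  unfold xiB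
  rw [Finsupp.finsetSum_apply]
  simp only [Finsupp.smul_apply, kk_apply, smul_eq_mul, hval]
  split_ifs with h
  · rw [Finset.sum_eq_single (a.1 N)]
    · rw [if_pos]
      · rw [mul_one, xiCoef]
      · intro t
        by_cases ht : t = N
        · subst ht
          simp
          omega
        · simp [ht, h.1 t ht]
    · intro m _ hm
      rw [if_neg, mul_zero]
      intro h'
      apply hm
      have := (h' N).1
      simp at this
      exact this.symm
    · intro h'
      exact absurd (Finset.mem_range.mpr (by omega)) h'
  · refine Finset.sum_eq_zero fun m _ => ?_
    rw [if_neg, mul_zero]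
    intro h'
    apply h
    constructor
    · intro t ht
      have := h' t
      simp [ht] at this
      exact this
    · have := h' N
      simp at this
      omega

@[simp]
lemma lastIdx_self (hN : ε N = false) (m : ℕ) : (lastIdx hN m).1 N = m :=
  upd_self hN _ m

lemma lastIdx_ne (hN : ε N = false) (m : ℕ) {t : Fin n} (ht : t ≠ N) :
    (lastIdx hN m).1 t = 0 :=
  upd_ne hN _ m ht

lemma eq_lastIdx (hN : ε N = false) (a : Idx ε) (h : ∀ t, t ≠ N → a.1 t = 0) :
    a = lastIdx hN (a.1 N) :=
  eq_upd hN _ _ _ rfl h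

lemma upd_lastIdx (hN : ε N = false) (m k : ℕ) : upd hN (lastIdx hN m) k = lastIdx hN k :=
  eq_upd hN _ _ _ (upd_self hN _ _) fun t ht => by
    rw [upd_ne hN _ _ ht, lastIdx_ne hN _ ht]

/-- The eigenvalues of `Δ(k_n)` separate the total occupation numbers of the last site. -/
lemma kval_last_inj (hq0 : q ≠ 0) (hp : pc ≠ 0) (hq : ∀ k : ℕ, k ≠ 0 → q ^ k ≠ 1)
    (hN : ε N = false) (hNn : (N : ℕ) = n - 1) (a b a' b' : Idx ε)
    (h : kval q pc ε (Fin.last n) a.1 * kval q pc ε (Fin.last n) b.1 =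
      kval q pc ε (Fin.last n) a'.1 * kval q pc ε (Fin.last n) b'.1) :
    a.1 N + b.1 N = a'.1 N + b'.1 N := by
  have key : ∀ s t : ℕ, s < t → q ^ s ≠ q ^ t := by
    intro s t hst h'
    apply hq (t - s) (by omega)
    apply mul_left_cancel₀ (pow_ne_zero s hq0)
    rw [← pow_add, mul_one, h']
    congr 1
    omega
  simp only [kval_last hN hNn, zpow_neg, zpow_natCast] at h
  have h' : q ^ (a.1 N + b.1 N) = q ^ (a'.1 N + b'.1 N) := by
    rw [pow_add, pow_add]
    have h1 := pow_ne_zero (a.1 N) hq0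
    have h2 := pow_ne_zero (b.1 N) hq0
    have h3 := pow_ne_zero (a'.1 N) hq0
    have h4 := pow_ne_zero (b'.1 N) hq0
    field_simp at h
    exact h.symm
  rcases lt_trichotomy (a.1 N + b.1 N) (a'.1 N + b'.1 N) with h1 | h1 | h1
  · exact absurd h' (key _ _ h1)
  · exact h1
  · exact absurd h'.symm (key _ _ h1)

lemma xiB_ne_zero (hq0 : q ≠ 0) (hq : ∀ k : ℕ, k ≠ 0 → q ^ k ≠ 1)
    (hN : ε N = false) (hNn : (N : ℕ) = n - 1) (l : ℕ) : xiB q pc ι ε l ≠ 0 := by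
  intro h
  have h1 := xiB_apply (q := q) (pc := pc) (ι := ι) hN hNn l (lastIdx hN 0) (lastIdx hN l)
  rw [h, Finsupp.zero_apply, if_pos ⟨fun t ht => ⟨lastIdx_ne hN _ ht, lastIdx_ne hN _ ht⟩,
    by simp⟩, lastIdx_self, xiCoef_zero pc hq0 hq, map_one] at h1
  exact zero_ne_one h1

lemma dEB_xiB (hq0 : q ≠ 0) (hp : pc ≠ 0) (hq : ∀ k : ℕ, k ≠ 0 → q ^ k ≠ 1)
    (hN : ε N = false) (hNn : (N : ℕ) = n - 1) (l : ℕ) (i : Fin (n + 1)) (hi : (i : ℕ) ≠ 0) :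
    dEB q pc ι ε x y i (xiB q pc ι ε l) = 0 := by
  ext ⟨a, b⟩
  rw [Finsupp.zero_apply]
  by_cases hin : i = Fin.last n
  · subst hin
    rw [dEB_last_apply hN hNn, xiB_apply hN hNn, xiB_apply hN hNn]
    by_cases h : (∀ t, t ≠ N → a.1 t = 0 ∧ b.1 t = 0) ∧ a.1 N + b.1 N + 1 = l
    · rw [if_pos, if_pos]
      · have := xiCoef_succ hp hq0 hq (a.1 N) (b.1 N)
        rw [upd_self, ← map_mul, ← map_mul, ← map_mul, ← map_add, ← h.2, this, map_zero]
      · refine ⟨fun t ht => ?_, by rw [upd_self]; omega⟩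
        rw [upd_ne hN _ _ ht]
        exact h.1 t ht
      · refine ⟨fun t ht => ?_, by rw [upd_self]; omega⟩
        rw [upd_ne hN _ _ ht]
        exact h.1 t ht
    · rw [if_neg, if_neg, zero_mul, zero_mul, add_zero]
      · rintro ⟨h1, h2⟩
        rw [upd_self] at h2
        refine h ⟨fun t ht => ?_, by omega⟩
        have := h1 t ht
        rwa [upd_ne hN _ _ ht] at this
      · rintro ⟨h1, h2⟩
        rw [upd_self] at h2
        refine h ⟨fun t ht => ?_, by omega⟩
        have := h1 t ht
        rwa [upd_ne hN _ _ ht] at this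
  · classical
    have hlt : (i : ℕ) < n := Fin.lt_last_iff_ne_last.mpr hin
    have hz : ∀ s : Idx ε × Idx ε, xiB q pc ι ε l s ≠ 0 →
        av s.1.1 ((i : ℕ) - 1) = 0 ∧ av s.2.1 ((i : ℕ) - 1) = 0 := by
      rintro ⟨s₁, s₂⟩ hs
      rw [xiB_apply hN hNn] at hs
      have h := (ite_ne_right_iff.mp hs).1.1 ⟨(i : ℕ) - 1, by omega⟩ fun e => by
        have := congrArg Fin.val e
        simp at this
        omega
      exact ⟨(av_fin s₁.1 _).trans h.1, (av_fin s₂.1 _).trans h.2⟩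
    rw [dEB_apply _ i hi]
    have h1 : ∀ s ∈ (xiB q pc ι ε l).support, _ := fun s hs => hz s (Finsupp.mem_support_iff.mp hs)
    rw [Finsupp.sum, Finset.sum_eq_zero, Finsupp.sum, Finset.sum_eq_zero, add_zero]
    · intro s hs
      simp [(h1 s hs).1, qnum_zero]
    · intro s hs
      simp [(h1 s hs).2, qnum_zero]

/-- On labels occupied only at the last site, `k_i ⊗ k_i` depends only on the total occupation. -/
lemma kval_mul (hq0 : q ≠ 0) (hn : 2 ≤ n) (hN : ε N = false) (hNn : (N : ℕ) = n - 1)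
    (i : Fin (n + 1)) (m j : ℕ) :
    kval q pc ε i (lastIdx hN m).1 * kval q pc ε i (lastIdx hN j).1 =
      kval q pc ε i (lastIdx hN 0).1 * kval q pc ε i (lastIdx hN (m + j)).1 := by
  have hav : ∀ p, p ≠ n - 1 → ∀ k, av (lastIdx hN k).1 p = 0 := by
    intro p hp k
    unfold av
    split_ifs with h
    · refine lastIdx_ne hN k fun e => hp ?_
      rw [← hNn, ← e]
    · rfl
  have hav' : ∀ k, av (lastIdx hN k).1 (n - 1) = k := by
    intro k
    rw [← hNn, av_fin, lastIdx_self]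
  have h1 : ((i : ℕ) - 1 ≠ n - 1) ∨ (i : ℕ) = 0 ∨ (i : ℕ) = n := by omega
  have hc := qc_ne_zero hq0 ε (n - 1)
  unfold kval
  split_ifs with h0 h2
  · simp only [hav 0 (by omega)]
  · simp only [hav']
    push_cast
    rw [neg_add, zpow_add₀ hc]
    simp
    ring
  · simp only [hav ((i : ℕ) - 1) (by omega)]
    by_cases h3 : (i : ℕ) = n - 1
    · rw [h3]
      simp only [hav']
      push_cast
      rw [zpow_add₀ hc]
      simp
    · simp only [hav _ h3]

lemma dKB_xiB (hq0 : q ≠ 0) (hn : 2 ≤ n) (hN : ε N = false) (hNn : (N : ℕ) = n - 1) (l : ℕ)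
    (i : Fin (n + 1)) : dKB q pc ι ε 1 i (xiB q pc ι ε l) =
      ι (kval q pc ε i (lastIdx hN 0).1 * kval q pc ε i (lastIdx hN l).1) • xiB q pc ι ε l := by
  ext ⟨a, b⟩
  rw [dKB_apply, Finsupp.smul_apply, smul_eq_mul, xiB_apply hN hNn]
  split_ifs with h
  · have ha := eq_lastIdx hN a fun t ht => (h.1 t ht).1
    have hb := eq_lastIdx hN b fun t ht => (h.1 t ht).2
    rw [← map_mul, mul_comm, ← h.2, ← kval_mul hq0 hn hN hNn, ← ha, ← hb]
  · simp

/-- A vector in the kernel of `Δ(e_n)` supported on the span of `|m·e_n⟩ ⊗ |(l-m)·e_n⟩` is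
determined by its coefficient at `m = 0`, by the same recurrence that `ξ_l` satisfies. -/
lemma coef_eq (hq0 : q ≠ 0) (hp : pc ≠ 0) (hq : ∀ k : ℕ, k ≠ 0 → q ^ k ≠ 1)
    (hN : ε N = false) (hNn : (N : ℕ) = n - 1) (v : WW L ε)
    (hv : dEB q pc ι ε x y (Fin.last n) v = 0) (l m j : ℕ) (hl : m + j = l) :
    v (lastIdx hN m, lastIdx hN j) = v (lastIdx hN 0, lastIdx hN l) * ι (xiCoef q pc l m) := by
  induction m generalizing j with
  | zero =>
    rw [zero_add] at hl
    rw [hl, xiCoef_zero pc hq0 hq, map_one, mul_one]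
  | succ m ih =>
    have h := dEB_last_apply (q := q) (pc := pc) (ι := ι) (x := x) (y := y) hN hNn v
      (lastIdx hN m) (lastIdx hN j)
    rw [hv, Finsupp.zero_apply, upd_lastIdx, upd_lastIdx, lastIdx_self, lastIdx_self,
      ih (j + 1) (by omega)] at h
    have hx := congrArg ι (xiCoef_succ hp hq0 hq m j)
    rw [show m + j + 1 = l by omega, map_zero] at hx
    simp only [map_add, map_mul] at hx h
    have h1 : ι (qnum q (m + 1)) * (ι pc * ι (q ^ (-(j : ℤ)))) ≠ 0 := by
      simp only [← map_mul]
      exact (map_ne_zero ι).mpr (mul_ne_zero (qnum_ne_zero hq0 hq (Nat.succ_ne_zero m))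
        (mul_ne_zero hp (zpow_ne_zero _ hq0)))
    apply mul_right_cancel₀ h1
    linear_combination -h - v (lastIdx hN 0, lastIdx hN l) * hx

end Kernel

/-- classification of type-B singular vectors in `𝒲⊗𝒲`. -/
theorem statement_16 (q qh : ℂ) (hq0 : q ≠ 0) (hqh : qh ^ 2 = q)
    (hq : ∀ k : ℕ, k ≠ 0 → q ^ k ≠ 1)
    {L : Type} [Field L] (ι : ℂ →+* L) (hι : Function.Injective ι)
    (x y : L) (hx : x ≠ 0) (hy : y ≠ 0)
    (n κ : ℕ) [NeZero n] (hn : 2 ≤ n) (hκ1 : 1 ≤ κ) (hκ2 : κ ≤ n - 1)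
    (ε : Fin n → Bool) (hε : ε = fun t : Fin n => decide ((t : ℕ) < κ)) :
    (∀ v : WW L ε, v ≠ 0 →
      (∀ i : Fin (n + 1), ∃ c : L, dKB q (Complex.I * qh⁻¹) ι ε 1 i v = c • v) →
      (∀ i : Fin (n + 1), (i : ℕ) ≠ 0 → dEB q (Complex.I * qh⁻¹) ι ε x y i v = 0) →
      ∃ l : ℕ, ∃ c : L, c ≠ 0 ∧ v = c • xiB q (Complex.I * qh⁻¹) ι ε l) ∧
    (∀ l : ℕ,
      xiB q (Complex.I * qh⁻¹) ι ε l ≠ 0 ∧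
      (∀ i : Fin (n + 1), (i : ℕ) ≠ 0 →
        dEB q (Complex.I * qh⁻¹) ι ε x y i (xiB q (Complex.I * qh⁻¹) ι ε l) = 0) ∧
      (∀ i : Fin (n + 1), ∃ c : L,
        dKB q (Complex.I * qh⁻¹) ι ε 1 i (xiB q (Complex.I * qh⁻¹) ι ε l)
          = c • xiB q (Complex.I * qh⁻¹) ι ε l)) := by
  have hqh0 : qh ≠ 0 := by
    rintro rfl
    exact hq0 (by simpa using hqh.symm)
  have hp : Complex.I * qh⁻¹ ≠ 0 := mul_ne_zero Complex.I_ne_zero (inv_ne_zero hqh0)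
  -- of `p` only its nonvanishing matters
  generalize Complex.I * qh⁻¹ = pc at hp ⊢
  -- `N` is the last site; it is bosonic because `κ ≤ n - 1`
  obtain ⟨N, hNn⟩ : ∃ N : Fin n, (N : ℕ) = n - 1 := ⟨⟨n - 1, by omega⟩, rfl⟩
  have hN : ε N = false := by
    rw [hε]
    simp
    omega
  refine ⟨fun v hv0 hK hE => ?_, fun l => ⟨xiB_ne_zero hq0 hq hN hNn l,
    fun i hi => dEB_xiB hq0 hp hq hN hNn l i hi, fun i => ⟨_, dKB_xiB hq0 hn hN hNn l i⟩⟩⟩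
  obtain ⟨⟨a₀, b₀⟩, h₀⟩ := Finsupp.ne_iff.mp hv0
  rw [Finsupp.zero_apply] at h₀
  have hlast := hE (Fin.last n) (by simp; omega)
  have hsupp : ∀ a b, v (a, b) ≠ 0 → ∀ t, t ≠ N → a.1 t = 0 ∧ b.1 t = 0 := by
    intro a b hab t ht
    have h1 : (t : ℕ) ≠ N := fun e => ht (Fin.ext e)
    exact support_last hq0 hp hq hN hNn v hE ((N : ℕ) - t - 1) t (by omega) a b hab
  obtain ⟨c, hc⟩ := hK (Fin.last n)
  have hkv : ∀ a b, v (a, b) ≠ 0 →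
      ι (kval q pc ε (Fin.last n) a.1 * kval q pc ε (Fin.last n) b.1) = c := by
    intro a b hab
    have h := congrArg (fun w : WW L ε => w (a, b)) hc
    simp only [dKB_apply, Finsupp.smul_apply, smul_eq_mul] at h
    rw [map_mul]
    exact mul_left_cancel₀ hab (h.trans (mul_comm _ _))
  -- the eigenvalue of `Δ(k_n)` fixes the total occupation `l` of the last site
  have hw : ∀ a b, v (a, b) ≠ 0 → a.1 N + b.1 N = a₀.1 N + b₀.1 N := fun a b hab =>
    kval_last_inj hq0 hp hq hN hNn a b a₀ b₀
      (hι ((hkv a b hab).trans (hkv a₀ b₀ h₀).symm))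
  have hcoef : ∀ a b : Idx ε, (∀ t, t ≠ N → a.1 t = 0 ∧ b.1 t = 0) →
      a.1 N + b.1 N = a₀.1 N + b₀.1 N →
      v (a, b) = v (lastIdx hN 0, lastIdx hN (a₀.1 N + b₀.1 N)) *
        ι (xiCoef q pc (a₀.1 N + b₀.1 N) (a.1 N)) := by
    intro a b h hl
    rw [← coef_eq hq0 hp hq hN hNn v hlast _ _ _ hl, ← eq_lastIdx hN a fun t ht => (h t ht).1,
      ← eq_lastIdx hN b fun t ht => (h t ht).2]
  refine ⟨a₀.1 N + b₀.1 N, v (lastIdx hN 0, lastIdx hN (a₀.1 N + b₀.1 N)), ?_, ?_⟩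
  · intro hz
    apply h₀
    rw [hcoef a₀ b₀ (hsupp a₀ b₀ h₀) rfl, hz, zero_mul]
  · ext ⟨a, b⟩
    rw [Finsupp.smul_apply, smul_eq_mul, xiB_apply hN hNn]
    split_ifs with h
    · exact hcoef a b h.1 h.2
    · rw [mul_zero]
      by_contra hab
      exact h ⟨hsupp a b hab, hw a b hab⟩

end TetraGQ
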